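/- Let m ≥ 3 and k ≥ 1 be integers, let f ∈ ℋ_k and u ∈ ℝ^m. Then for every y > 0, c_{m,k} ∫_{ℝ^{m-1}} (y / |(x′,y)|^m) · f(R_{(x′,y)}(u)) dx′ = f(u), where (x′,y) denotes the point of ℝ^m with first m−1 coordinates x′ and last coordinate y (so |(x′,y)|² = |x′|² + y²), and c_{m,k} = 2(m+2k−2)/((m−2)ω_m). In particular the integral is independent of y > 0. -/

import Mathlib

noncomputable section

open MeasureTheory Metric Filter Topology
open scoped RealInnerProductSpace

/-- `ℝ^m` as a Euclidean space. -/
abbrev Evec (m : ℕ) : Type := EuclideanSpace ℝ (Fin m)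

/-- Partial derivative in the `i`-th coordinate direction. -/
def pdv {m : ℕ} (i : Fin m) (f : Evec m → ℝ) (x : Evec m) : ℝ :=
  fderiv ℝ f x (EuclideanSpace.single i 1)

/-- Euclidean Laplacian on `ℝ^m`. -/
def lapl {m : ℕ} (f : Evec m → ℝ) (x : Evec m) : ℝ :=
  ∑ i : Fin m, pdv i (pdv i f) x

/-- `p` is a real-valued polynomial function on `ℝ^m`, homogeneous of degree `k` and
harmonic; i.e. `p ∈ ℋ_k`. -/
def IsHk (m k : ℕ) (p : Evec m → ℝ) : Prop :=
  (∃ P : MvPolynomial (Fin m) ℝ, ∀ x : Evec m, p x = MvPolynomial.eval (fun i => x i) P) ∧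
  (∀ (c : ℝ) (x : Evec m), p (c • x) = c ^ k * p x) ∧
  (∀ x : Evec m, lapl p x = 0)

/-- The surface measure `dS` on the unit sphere `𝕊^{m-1}`, as a measure on `ℝ^m`. -/
def sphereM (m : ℕ) : Measure (Evec m) :=
  Measure.map Subtype.val ((volume : Measure (Evec m)).toSphere)

/-- `ω_m`, the surface area of the unit sphere `𝕊^{m-1}`. -/
def omegaS (m : ℕ) : ℝ := (sphereM m Set.univ).toReal

/-- The constant `c_{m,k} = 2(m+2k-2)/((m-2)ω_m)`. -/
def cmk (m k : ℕ) : ℝ := 2 * ((m : ℝ) + 2 * k - 2) / (((m : ℝ) - 2) * omegaS m)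

/-- The reflection `R_a(u) = u - 2⟨a,u⟩a/|a|²` (in Clifford notation `a u a/|a|²`). -/
def reflv {m : ℕ} (a u : Evec m) : Evec m :=
  u - (2 * ⟪a, u⟫ / ‖a‖ ^ 2) • a

/-- `dim ℋ_k`. -/
def hdim (m k : ℕ) : ℕ :=
  Nat.choose (m + k - 1) (m - 1) - Nat.choose (m + k - 3) (m - 1)

/-- `Z` is the reproducing kernel `Z_k` of `ℋ_k` on the unit sphere: a symmetric,
rotation invariant kernel, bounded by `dim ℋ_k` on the unit ball, belonging to `ℋ_k`
in the first variable and reproducing elements of `ℋ_k` from their spherical values. -/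
def IsZk (m k : ℕ) (Z : Evec m → Evec m → ℝ) : Prop :=
  (∀ v : Evec m, IsHk m k (fun u => Z u v)) ∧
  (∀ p : Evec m → ℝ, IsHk m k p → ∀ v : Evec m, (∫ u, Z u v * p u ∂(sphereM m)) = p v) ∧
  (∀ u v : Evec m, Z u v = Z v u) ∧
  (∀ u v : Evec m, ‖u‖ ≤ 1 → ‖v‖ ≤ 1 → |Z u v| ≤ (hdim m k : ℝ)) ∧
  (∀ (A : Evec m ≃ₗᵢ[ℝ] Evec m) (u v : Evec m), Z (A u) (A v) = Z u v)

/-- The point `(x', y) ∈ ℝ^{d+1}` with first `d` coordinates `x'` and last coordinate `y`. -/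
def upP (d : ℕ) (x' : Evec d) (y : ℝ) : Evec (d + 1) :=
  (EuclideanSpace.equiv (Fin (d + 1)) ℝ).symm
    (Fin.snoc (⇑(EuclideanSpace.equiv (Fin d) ℝ) x') y)

/-- The first `d` coordinates of a point of `ℝ^{d+1}`. -/
def downP (d : ℕ) (x : Evec (d + 1)) : Evec d :=
  (EuclideanSpace.equiv (Fin d) ℝ).symm (fun i => x (Fin.castSucc i))

/-- The last coordinate of a point of `ℝ^{d+1}`. -/
def lastP (d : ℕ) (x : Evec (d + 1)) : ℝ := x (Fin.last d)

/-- The Poisson kernel `P_H` for bosonic Laplacians in the upper half-space `ℝ^{d+1}_+`,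
`P_H(x,t,u,v) = c_{m,k} (y/|x-t|^m) Z_k(R_{x-t}(u), v)` with `m = d+1`, `x = (x',y)`,
`t = (t',0)`. -/
def PH (d k : ℕ) (Z : Evec (d + 1) → Evec (d + 1) → ℝ) (x' : Evec d) (y : ℝ)
    (t' : Evec d) (u v : Evec (d + 1)) : ℝ :=
  cmk (d + 1) k * (y / ‖upP d x' y - upP d t' 0‖ ^ (d + 1)) *
    Z (reflv (upP d x' y - upP d t' 0) u) v

/-- The Poisson integral `P_H[f]` in the upper half-space. -/
def PHint (d k : ℕ) (Z : Evec (d + 1) → Evec (d + 1) → ℝ)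
    (f : Evec d → Evec (d + 1) → ℝ) (x' : Evec d) (y : ℝ) (v : Evec (d + 1)) : ℝ :=
  ∫ t' : Evec d, (∫ u, PH d k Z x' y t' u v * f t' u ∂(sphereM (d + 1)))

/-- The Poisson kernel `P_B` for bosonic Laplacians in the unit ball. -/
def PB (m k : ℕ) (Z : Evec m → Evec m → ℝ) (x ζ ω ν : Evec m) : ℝ :=
  (cmk m k / 2) * ((1 - ‖x‖ ^ 2) / ‖x - ζ‖ ^ m) * Z (reflv (x - ζ) ω) ν

/-- The Poisson integral `P_B[h]` in the unit ball. -/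
def PBint (m k : ℕ) (Z : Evec m → Evec m → ℝ) (h : Evec m → Evec m → ℝ)
    (x ν : Evec m) : ℝ :=
  ∫ ζ, (∫ ω, PB m k Z x ζ ω ν * h ζ ω ∂(sphereM m)) ∂(sphereM m)

/-- Partial derivative in the first (`x`) variable. -/
def pd1 {m : ℕ} (i : Fin m) (f : Evec m → Evec m → ℝ) : Evec m → Evec m → ℝ :=
  fun x u => fderiv ℝ (fun x₁ => f x₁ u) x (EuclideanSpace.single i 1)

/-- Partial derivative in the second (`u`) variable. -/
def pd2 {m : ℕ} (i : Fin m) (f : Evec m → Evec m → ℝ) : Evec m → Evec m → ℝ :=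
  fun x u => fderiv ℝ (fun u₁ => f x u₁) u (EuclideanSpace.single i 1)

/-- The bosonic Laplacian `𝒟_k`. -/
def Dk (m k : ℕ) (f : Evec m → Evec m → ℝ) : Evec m → Evec m → ℝ := fun x u =>
  (∑ i : Fin m, pd1 i (pd1 i f) x u)
    - (4 / ((m : ℝ) + 2 * k - 2)) *
        ∑ i : Fin m, ∑ j : Fin m, u i * pd1 i (pd2 j (pd1 j f)) x u
    + (4 * ‖u‖ ^ 2 / (((m : ℝ) + 2 * k - 2) * ((m : ℝ) + 2 * k - 4))) *
        ∑ i : Fin m, ∑ j : Fin m, pd2 i (pd1 i (pd2 j (pd1 j f))) x u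

/-- `f ∈ C²(Ω×𝔹^m, ℋ_k)`: twice continuously differentiable on `Ω × 𝔹^m` and, for each
fixed `x ∈ Ω`, coinciding in the second variable with an element of `ℋ_k`. -/
def C2Hk (m k : ℕ) (Ω : Set (Evec m)) (f : Evec m → Evec m → ℝ) : Prop :=
  ContDiffOn ℝ 2 (fun q : Evec m × Evec m => f q.1 q.2) (Ω ×ˢ ball (0 : Evec m) 1) ∧
  ∀ x ∈ Ω, ∃ q, IsHk m k q ∧ ∀ u ∈ closedBall (0 : Evec m) 1, f x u = q u

/-- The `L^p` norm `(∫_{ℝ^{m-1}} ∫_{𝕊^{m-1}} |f(x',u)|^p dS(u) dx')^{1/p}` (`m = d+1`),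
valued in `ℝ≥0∞`. -/
def lpH (d : ℕ) (p : ℝ) (f : Evec d → Evec (d + 1) → ℝ) : ENNReal :=
  (∫⁻ x' : Evec d, ∫⁻ u, ENNReal.ofReal (|f x' u| ^ p) ∂(sphereM (d + 1))) ^ (1 / p)

/-- `f ∈ L^p(ℝ^{m-1}×𝔹^m, ℋ_k)` (`m = d+1`). -/
def MemLpH (d k : ℕ) (p : ℝ) (f : Evec d → Evec (d + 1) → ℝ) : Prop :=
  Measurable (fun q : Evec d × Evec (d + 1) => f q.1 q.2) ∧
  (∀ x' : Evec d, ∃ q, IsHk (d + 1) k q ∧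
    ∀ u ∈ closedBall (0 : Evec (d + 1)) 1, f x' u = q u) ∧
  lpH d p f < ⊤

/-- The `L^p` norm `(∫_{𝕊^{m-1}} ∫_{𝕊^{m-1}} |h(ζ,ω)|^p dS(ω) dS(ζ))^{1/p}`,
valued in `ℝ≥0∞`. -/
def lpS (m : ℕ) (p : ℝ) (h : Evec m → Evec m → ℝ) : ENNReal :=
  (∫⁻ ζ, ∫⁻ ω, ENNReal.ofReal (|h ζ ω| ^ p) ∂(sphereM m) ∂(sphereM m)) ^ (1 / p)

/-- `h ∈ L^p(𝕊^{m-1}×𝔹^m, ℋ_k)`. -/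
def MemLpS (m k : ℕ) (p : ℝ) (h : Evec m → Evec m → ℝ) : Prop :=
  Measurable (fun q : Evec m × Evec m => h q.1 q.2) ∧
  (∀ ζ : Evec m, ‖ζ‖ = 1 → ∃ q, IsHk m k q ∧
    ∀ ω ∈ closedBall (0 : Evec m) 1, h ζ ω = q ω) ∧
  lpS m p h < ⊤

/-- Iterated partial derivative `D_x^α` in the first variable, for a multi-index `α ∈ ℕ^m`. -/
def Dx {m : ℕ} (α : Fin m → ℕ) (f : Evec m → Evec m → ℝ) : Evec m → Evec m → ℝ :=
  (List.finRange m).foldr (fun i g => (pd1 i)^[α i] g) f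

/-- Iterated partial derivative `D_ν^β` in the second variable, for a multi-index `β ∈ ℕ^m`. -/
def Dv {m : ℕ} (β : Fin m → ℕ) (f : Evec m → Evec m → ℝ) : Evec m → Evec m → ℝ :=
  (List.finRange m).foldr (fun i g => (pd2 i)^[β i] g) f

/-! ### One-dimensional Gaussian moments -/

theorem integrable_pow_mul_exp_neg_sq_div_two (n : ℕ) :
    Integrable fun x : ℝ => x ^ n * Real.exp (-(x ^ 2) / 2) := by
  have h := integrable_rpow_mul_exp_neg_mul_sq (b := 1 / 2) (by norm_num)
    (s := n) (by linarith [n.cast_nonneg (α := ℝ)])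
  refine h.congr (Eventually.of_forall fun x => ?_)
  simp only [Real.rpow_natCast]
  congr 2
  ring

theorem integral_pow_succ_mul_exp_neg_sq_div_two (n : ℕ) :
    ∫ x : ℝ, x ^ (n + 1) * Real.exp (-(x ^ 2) / 2) =
      n * ∫ x : ℝ, x ^ (n - 1) * Real.exp (-(x ^ 2) / 2) := by
  have hd (x : ℝ) : HasDerivAt (fun x : ℝ => x ^ n * Real.exp (-(x ^ 2) / 2))
      (n * (x ^ (n - 1) * Real.exp (-(x ^ 2) / 2)) - x ^ (n + 1) * Real.exp (-(x ^ 2) / 2)) x := by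
    have h2 : HasDerivAt (fun x : ℝ => -(x ^ 2) / 2) (-x) x := by
      refine ((hasDerivAt_pow 2 x).neg.div_const 2).congr_deriv ?_
      norm_num
      ring
    refine ((hasDerivAt_pow n x).mul h2.exp).congr_deriv ?_
    ring
  have hi := ((integrable_pow_mul_exp_neg_sq_div_two (n - 1)).const_mul (n : ℝ)).sub
    (integrable_pow_mul_exp_neg_sq_div_two (n + 1))
  have h := integral_eq_zero_of_hasDerivAt_of_integrable hd hi
    (integrable_pow_mul_exp_neg_sq_div_two n)
  rw [integral_sub ((integrable_pow_mul_exp_neg_sq_div_two (n - 1)).const_mul (n : ℝ))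
    (integrable_pow_mul_exp_neg_sq_div_two (n + 1)), integral_const_mul] at h
  linarith

/-! ### The Gaussian functional on polynomials -/

section GaussianFunctional

open MvPolynomial

theorem pderiv_comm {σ : Type*} (i j : σ) (P : MvPolynomial σ ℝ) :
    pderiv i (pderiv j P) = pderiv j (pderiv i P) := by
  classical
  induction P using MvPolynomial.induction_on' with
  | monomial s a =>
    simp only [pderiv_monomial]
    by_cases hij : i = j
    · rw [hij]
    · congr 1
      · rw [tsub_right_comm]
      · simp [hij, Ne.symm hij]
        ring
  | add p q hp hq => simp only [map_add, hp, hq]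

variable {σ : Type*} [Fintype σ]

/-- The unnormalised standard Gaussian weight. -/
def gaussWeight (x : σ → ℝ) : ℝ := ∏ i, Real.exp (-(x i ^ 2) / 2)

/-- Integration of a polynomial against the Gaussian weight. -/
def gaussInt (P : MvPolynomial σ ℝ) : ℝ := ∫ x : σ → ℝ, eval x P * gaussWeight x

theorem eval_monomial_mul_gaussWeight (s : σ →₀ ℕ) (a : ℝ) (x : σ → ℝ) :
    eval x (monomial s a) * gaussWeight x =
      a * ∏ i, (x i ^ s i * Real.exp (-(x i ^ 2) / 2)) := by
  rw [eval_monomial, Finsupp.prod_fintype _ _ (fun i => pow_zero _), gaussWeight,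
    Finset.prod_mul_distrib, mul_assoc]

theorem integrable_eval_mul_gaussWeight (P : MvPolynomial σ ℝ) :
    Integrable fun x : σ → ℝ => eval x P * gaussWeight x := by
  induction P using MvPolynomial.induction_on' with
  | monomial s a =>
    simp only [eval_monomial_mul_gaussWeight]
    exact (Integrable.fintype_prod (f := fun i x => x ^ s i * Real.exp (-(x ^ 2) / 2))
      fun i => integrable_pow_mul_exp_neg_sq_div_two (s i)).const_mul a
  | add p q hp hq =>
    simp only [map_add, add_mul]
    exact hp.add hq

theorem gaussInt_monomial (s : σ →₀ ℕ) (a : ℝ) :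
    gaussInt (monomial s a) = a * ∏ i, ∫ x : ℝ, x ^ s i * Real.exp (-(x ^ 2) / 2) := by
  simp only [gaussInt, eval_monomial_mul_gaussWeight]
  rw [integral_const_mul, integral_fintype_prod_volume_eq_prod
    fun i x => x ^ s i * Real.exp (-(x ^ 2) / 2)]

theorem gaussInt_add (P Q : MvPolynomial σ ℝ) : gaussInt (P + Q) = gaussInt P + gaussInt Q := by
  simp only [gaussInt, map_add, add_mul]
  exact integral_add (integrable_eval_mul_gaussWeight P) (integrable_eval_mul_gaussWeight Q)

theorem gaussInt_C_mul (a : ℝ) (P : MvPolynomial σ ℝ) :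
    gaussInt (C a * P) = a * gaussInt P := by
  simp only [gaussInt, map_mul, eval_C, mul_assoc]
  exact integral_const_mul _ _

theorem gaussInt_zero : gaussInt (0 : MvPolynomial σ ℝ) = 0 := by
  simp [gaussInt]

theorem gaussInt_sum {ι : Type*} (s : Finset ι) (P : ι → MvPolynomial σ ℝ) :
    gaussInt (∑ i ∈ s, P i) = ∑ i ∈ s, gaussInt (P i) := by
  classical
  induction s using Finset.induction_on with
  | empty => simp [gaussInt_zero]
  | insert i s hi ih => rw [Finset.sum_insert hi, Finset.sum_insert hi, gaussInt_add, ih]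

/-- Gaussian integration by parts (Stein's identity). -/
theorem gaussInt_X_mul (i : σ) (P : MvPolynomial σ ℝ) :
    gaussInt (X i * P) = gaussInt (pderiv i P) := by
  classical
  induction P using MvPolynomial.induction_on' with
  | monomial s a =>
    rw [X, monomial_mul, pderiv_monomial, gaussInt_monomial, gaussInt_monomial,
      ← Finset.mul_prod_erase Finset.univ
        (fun j => ∫ x : ℝ, x ^ (Finsupp.single i 1 + s : σ →₀ ℕ) j * Real.exp (-(x ^ 2) / 2))
        (Finset.mem_univ i),
      ← Finset.mul_prod_erase Finset.univ
        (fun j => ∫ x : ℝ, x ^ (s - Finsupp.single i 1 : σ →₀ ℕ) j * Real.exp (-(x ^ 2) / 2))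
        (Finset.mem_univ i)]
    have hprod : ∀ j ∈ Finset.univ.erase i,
        ∫ x : ℝ, x ^ (Finsupp.single i 1 + s : σ →₀ ℕ) j * Real.exp (-(x ^ 2) / 2) =
        ∫ x : ℝ, x ^ (s - Finsupp.single i 1 : σ →₀ ℕ) j * Real.exp (-(x ^ 2) / 2) := by
      intro j hj
      have hij : i ≠ j := (Finset.ne_of_mem_erase hj).symm
      simp [hij]
    rw [Finset.prod_congr rfl hprod]
    have h1 : (Finsupp.single i 1 + s : σ →₀ ℕ) i = s i + 1 := by simp [add_comm]
    have h2 : (s - Finsupp.single i 1 : σ →₀ ℕ) i = s i - 1 := by simp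
    rw [h1, h2, integral_pow_succ_mul_exp_neg_sq_div_two]
    ring
  | add p q hp hq => rw [mul_add, map_add, gaussInt_add, gaussInt_add, hp, hq]

/-! ### Harmonic polynomials and the Gaussian functional -/

/-- The Laplacian of a polynomial. -/
def mvLaplacian (P : MvPolynomial σ ℝ) : MvPolynomial σ ℝ := ∑ i, pderiv i (pderiv i P)

/-- The derivative of a polynomial in the direction `u`. -/
def dirDeriv (u : σ → ℝ) (P : MvPolynomial σ ℝ) : MvPolynomial σ ℝ := ∑ i, C (u i) * pderiv i P

/-- The linear form `⟨u, ·⟩` as a polynomial. -/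
def linForm (u : σ → ℝ) : MvPolynomial σ ℝ := ∑ i, C (u i) * X i

theorem pderiv_linForm (u : σ → ℝ) (i : σ) : pderiv i (linForm u) = C (u i) := by
  classical
  simp [linForm, pderiv_X, Pi.single_apply]

theorem mvLaplacian_dirDeriv (u : σ → ℝ) (P : MvPolynomial σ ℝ) :
    mvLaplacian (dirDeriv u P) = dirDeriv u (mvLaplacian P) := by
  simp only [mvLaplacian, dirDeriv, map_sum, pderiv_C_mul, Finset.mul_sum]
  rw [Finset.sum_comm]
  refine Finset.sum_congr rfl fun i _ => Finset.sum_congr rfl fun j _ => ?_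
  rw [pderiv_comm j i P, pderiv_comm j i]

theorem isHomogeneous_dirDeriv (u : σ → ℝ) {P : MvPolynomial σ ℝ} {n : ℕ}
    (hP : P.IsHomogeneous n) : (dirDeriv u P).IsHomogeneous (n - 1) :=
  IsHomogeneous.sum _ _ _ fun i _ => by
    simpa using (isHomogeneous_C σ (u i)).mul (hP.pderiv (i := i))

theorem eval_self_dirDeriv (u : σ → ℝ) {P : MvPolynomial σ ℝ} {n : ℕ}
    (hP : P.IsHomogeneous n) : eval u (dirDeriv u P) = n * eval u P := by
  have h := congrArg (eval u) hP.sum_X_mul_pderiv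
  simpa [dirDeriv] using h

theorem gaussInt_linForm_mul (u : σ → ℝ) (P : MvPolynomial σ ℝ) :
    gaussInt (linForm u * P) = gaussInt (dirDeriv u P) := by
  simp only [linForm, dirDeriv, Finset.sum_mul, gaussInt_sum, mul_assoc, gaussInt_C_mul,
    gaussInt_X_mul]

theorem gaussInt_eq_zero_of_harmonic {P : MvPolynomial σ ℝ} {n : ℕ} (hn : n ≠ 0)
    (hP : P.IsHomogeneous n) (hL : mvLaplacian P = 0) : gaussInt P = 0 := by
  have h : gaussInt (∑ i, X i * pderiv i P) = gaussInt (C (n : ℝ) * P) := by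
    rw [hP.sum_X_mul_pderiv]
    simp
  rw [gaussInt_C_mul, gaussInt_sum] at h
  simp only [gaussInt_X_mul] at h
  rw [← gaussInt_sum] at h
  change gaussInt (mvLaplacian P) = _ at h
  rw [hL, gaussInt_zero] at h
  have : (n : ℝ) ≠ 0 := by exact_mod_cast hn
  simpa [this] using h.symm

theorem dirDeriv_linForm_pow_mul (u : σ → ℝ) (a : ℕ) (P : MvPolynomial σ ℝ) :
    dirDeriv u (linForm u ^ a * P) =
      C (a * ∑ i, u i ^ 2) * (linForm u ^ (a - 1) * P) + linForm u ^ a * dirDeriv u P := by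
  simp only [dirDeriv, pderiv_mul, pderiv_pow, pderiv_linForm, mul_add, Finset.sum_add_distrib]
  congr 1
  · simp only [map_mul, map_sum, map_natCast, map_pow, Finset.mul_sum, Finset.sum_mul]
    exact Finset.sum_congr rfl fun i _ => by ring
  · rw [Finset.mul_sum]
    exact Finset.sum_congr rfl fun i _ => by ring

/-- Pairing a harmonic polynomial with a power of a linear form not exceeding its degree. -/
theorem gaussInt_linForm_pow_mul_harmonic (u : σ → ℝ) (a : ℕ) :
    ∀ (n : ℕ) (P : MvPolynomial σ ℝ), P.IsHomogeneous n → mvLaplacian P = 0 → a ≤ n →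
      gaussInt (linForm u ^ a * P) =
        if a = n then (n.factorial : ℝ) * eval u P * gaussInt (1 : MvPolynomial σ ℝ) else 0 := by
  induction a using Nat.strong_induction_on with
  | _ a ih =>
    intro n P hP hL han
    rcases Nat.eq_zero_or_pos a with rfl | ha
    · rcases Nat.eq_zero_or_pos n with rfl | hn
      · have hC := totalDegree_eq_zero_iff_eq_C.mp (Nat.le_zero.mp hP.totalDegree_le)
        rw [hC]
        have := gaussInt_C_mul (coeff 0 P) (1 : MvPolynomial σ ℝ)
        simpa using this
      · rw [if_neg hn.ne, pow_zero, one_mul, gaussInt_eq_zero_of_harmonic hn.ne' hP hL]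
    · obtain ⟨b, rfl⟩ : ∃ b, a = b + 1 := ⟨a - 1, by omega⟩
      rw [pow_succ', mul_assoc, gaussInt_linForm_mul, dirDeriv_linForm_pow_mul, gaussInt_add,
        gaussInt_C_mul]
      have h1 : (b : ℝ) * (∑ i, u i ^ 2) * gaussInt (linForm u ^ (b - 1) * P) = 0 := by
        rw [ih (b - 1) (by omega) n P hP hL (by omega), if_neg (by omega), mul_zero]
      rw [h1, zero_add, ih b (by omega) (n - 1) _ (isHomogeneous_dirDeriv u hP)
        (by rw [mvLaplacian_dirDeriv, hL]; simp [dirDeriv]) (by omega), eval_self_dirDeriv u hP]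
      obtain ⟨l, rfl⟩ : ∃ l, n = l + 1 := ⟨n - 1, by omega⟩
      simp only [Nat.add_sub_cancel, Nat.factorial_succ, add_left_inj]
      split_ifs
      · push_cast
        ring
      · rfl

end GaussianFunctional

/-! ### Taylor components of a polynomial -/

section Taylor

open MvPolynomial

/-- The polynomial `P (u + X)`. -/
def shiftPoly {σ : Type*} (u : σ → ℝ) (P : MvPolynomial σ ℝ) : MvPolynomial σ ℝ :=
  aeval (fun i => C (u i) + X i) P

/-- The part of `P (u + X)` which is homogeneous of degree `n` in `X`. -/
def taylorPart {σ : Type*} (u : σ → ℝ) (P : MvPolynomial σ ℝ) (n : ℕ) : MvPolynomial σ ℝ :=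
  homogeneousComponent n (shiftPoly u P)

theorem pderiv_shiftPoly {σ : Type*} (u : σ → ℝ) (i : σ) (P : MvPolynomial σ ℝ) :
    pderiv i (shiftPoly u P) = shiftPoly u (pderiv i P) := by
  classical
  unfold shiftPoly
  induction P using MvPolynomial.induction_on with
  | C a => simp
  | add p q hp hq => simp only [map_add, hp, hq]
  | mul_X p j hp =>
    simp only [map_mul, aeval_X, pderiv_mul, hp, map_add, pderiv_C, pderiv_X, zero_add]
    by_cases hij : j = i
    · subst hij
      simp
    · simp [hij]

theorem pderiv_homogeneousComponent_succ {σ : Type*} (i : σ) (n : ℕ) (P : MvPolynomial σ ℝ) :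
    pderiv i (homogeneousComponent (n + 1) P) = homogeneousComponent n (pderiv i P) := by
  classical
  ext s
  rw [coeff_pderiv, coeff_homogeneousComponent, coeff_homogeneousComponent, coeff_pderiv]
  simp [Finsupp.degree_single]

theorem pderiv_pderiv_taylorPart {σ : Type*} (u : σ → ℝ) (P : MvPolynomial σ ℝ) (i : σ) (n : ℕ) :
    pderiv i (pderiv i (taylorPart u P (n + 2))) = taylorPart u (pderiv i (pderiv i P)) n := by
  simp only [taylorPart, pderiv_homogeneousComponent_succ, pderiv_shiftPoly]

variable {σ : Type*} [Fintype σ]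

theorem mvLaplacian_taylorPart (u : σ → ℝ) {P : MvPolynomial σ ℝ} (hP : mvLaplacian P = 0)
    (n : ℕ) : mvLaplacian (taylorPart u P n) = 0 := by
  match n with
  | 0 => simp [taylorPart, mvLaplacian]
  | 1 => simp [taylorPart, mvLaplacian, pderiv_homogeneousComponent_succ]
  | n + 2 =>
    simp only [mvLaplacian, pderiv_pderiv_taylorPart]
    simp only [taylorPart, shiftPoly, ← map_sum]
    rw [show ∑ i, pderiv i (pderiv i P) = 0 from hP]
    simp

theorem eval_smul_of_isHomogeneous {P : MvPolynomial σ ℝ} {n : ℕ} (hP : P.IsHomogeneous n)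
    (t : ℝ) (x : σ → ℝ) : eval (t • x) P = t ^ n * eval x P := by
  rw [eval_eq', eval_eq', Finset.mul_sum]
  refine Finset.sum_congr rfl fun s hs => ?_
  have hdeg : ∑ i, s i = n := by
    rw [← hP (mem_support_iff.mp hs), Finsupp.weight_apply, Finsupp.sum_fintype _ _ (by simp)]
    simp
  simp only [Pi.smul_apply, smul_eq_mul, mul_pow, Finset.prod_mul_distrib,
    Finset.prod_pow_eq_pow_sum, hdeg]
  ring

theorem eval_add_smul_eq_sum_taylorPart (u : σ → ℝ) (P : MvPolynomial σ ℝ) (t : ℝ) (x : σ → ℝ)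
    {N : ℕ} (hN : (shiftPoly u P).totalDegree < N) :
    eval (u + t • x) P = ∑ n ∈ Finset.range N, t ^ n * eval x (taylorPart u P n) := by
  have h1 : eval (u + t • x) P = eval (t • x) (shiftPoly u P) := by
    unfold shiftPoly
    rw [← MvPolynomial.coe_aeval_eq_eval, ← MvPolynomial.coe_aeval_eq_eval]
    simp only [RingHom.coe_coe]
    rw [← AlgHom.comp_apply, comp_aeval]
    congr 2
    funext i
    simp
  have h2 : ∑ n ∈ Finset.range N, taylorPart u P n = shiftPoly u P := by
    rw [← Finset.sum_subset (Finset.range_mono hN)]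
    · exact sum_homogeneousComponent _
    · intro n _ hn
      exact homogeneousComponent_eq_zero _ _ (by simpa using hn)
  rw [h1, ← h2, map_sum]
  exact Finset.sum_congr rfl fun n _ =>
    eval_smul_of_isHomogeneous (homogeneousComponent_isHomogeneous n _) t x

/-- For a function homogeneous of degree `k`, the Taylor parts at `u`, evaluated at `u`. -/
theorem eval_self_taylorPart (u : σ → ℝ) {P : MvPolynomial σ ℝ} {k : ℕ}
    (hP : ∀ (c : ℝ) (x : σ → ℝ), eval (c • x) P = c ^ k * eval x P) (n : ℕ) :
    eval u (taylorPart u P n) = k.choose n * eval u P := by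
  set N := max ((shiftPoly u P).totalDegree + 1) (n + 1) with hN
  have key : (∑ j ∈ Finset.range N, Polynomial.C (eval u (taylorPart u P j)) * Polynomial.X ^ j) =
      Polynomial.C (eval u P) * (Polynomial.X + 1) ^ k := by
    refine Polynomial.funext fun t => ?_
    have h := eval_add_smul_eq_sum_taylorPart u P t u (N := N) (by omega)
    have hu : u + t • u = (t + 1) • u := by rw [add_smul, one_smul, add_comm]
    rw [hu, hP] at h
    simp only [Polynomial.eval_finsetSum, Polynomial.eval_mul, Polynomial.eval_C,
      Polynomial.eval_pow, Polynomial.eval_X, Polynomial.eval_add, Polynomial.eval_one]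
    rw [mul_comm, h]
    exact Finset.sum_congr rfl fun j _ => mul_comm _ _
  have hc := congrArg (fun p => Polynomial.coeff p n) key
  simp only [Polynomial.finsetSum_coeff, Polynomial.coeff_C_mul, Polynomial.coeff_X_pow,
    Polynomial.coeff_X_add_one_pow, mul_ite, mul_one, mul_zero, Finset.sum_ite_eq] at hc
  rw [if_pos (Finset.mem_range.mpr (by omega))] at hc
  rw [hc, mul_comm]

end Taylor

/-! ### Partial derivatives of polynomial functions -/

section PolynomialFunctions

open MvPolynomial

theorem hasFDerivAt_eval {m : ℕ} (P : MvPolynomial (Fin m) ℝ) (x : Evec m) :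
    HasFDerivAt (fun x : Evec m => eval (fun i => x i) P)
      (∑ i, eval (fun i => x i) (pderiv i P) • (EuclideanSpace.proj i : Evec m →L[ℝ] ℝ)) x := by
  induction P using MvPolynomial.induction_on with
  | C a => simpa using hasFDerivAt_const a x
  | add p q hp hq =>
    simp only [map_add, add_smul, Finset.sum_add_distrib]
    exact hp.add hq
  | mul_X p j hp =>
    have hj : HasFDerivAt (fun x : Evec m => x j) (EuclideanSpace.proj j : Evec m →L[ℝ] ℝ) x :=
      (EuclideanSpace.proj j : Evec m →L[ℝ] ℝ).hasFDerivAt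
    simp only [map_mul, eval_X]
    refine (hp.mul hj).congr_fderiv ?_
    simp only [pderiv_mul, pderiv_X, map_add, map_mul, eval_X, add_smul, Finset.sum_add_distrib,
      Finset.smul_sum, smul_smul, Pi.single_apply]
    rw [add_comm]
    congr 1
    · exact Finset.sum_congr rfl fun i _ => by rw [mul_comm]
    · rw [Finset.sum_eq_single j]
      · simp
      · intro i _ hi
        simp [hi.symm]
      · simp

theorem pdv_eval {m : ℕ} (i : Fin m) (P : MvPolynomial (Fin m) ℝ) :
    pdv i (fun x : Evec m => eval (fun i => x i) P) =
      fun x : Evec m => eval (fun i => x i) (pderiv i P) := by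
  funext x
  rw [pdv, (hasFDerivAt_eval P x).fderiv]
  simp

theorem mvLaplacian_eq_zero_of_lapl {m : ℕ} (P : MvPolynomial (Fin m) ℝ)
    (h : ∀ x : Evec m, lapl (fun x : Evec m => eval (fun i => x i) P) x = 0) :
    mvLaplacian P = 0 := by
  refine MvPolynomial.funext fun x => ?_
  have := h (WithLp.toLp 2 x)
  simpa [lapl, pdv_eval, mvLaplacian] using this

end PolynomialFunctions

/-! ### Radial Gaussian integrals -/

/-- The Gaussian moment `∫₀^∞ t^q exp (-t²/2) dt`. -/
def radialMoment (q : ℕ) : ℝ := ∫ t in Set.Ioi (0 : ℝ), t ^ q * Real.exp (-(t ^ 2) / 2)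

theorem radialMoment_eq_Gamma (q : ℕ) :
    radialMoment q =
      (1 / 2 : ℝ) ^ (-((q : ℝ) + 1) / 2) * (1 / 2) * Real.Gamma (((q : ℝ) + 1) / 2) := by
  rw [← integral_rpow_mul_exp_neg_mul_rpow (p := 2) (q := q) (b := 1 / 2) (by norm_num)
    (by linarith [q.cast_nonneg (α := ℝ)]) (by norm_num)]
  refine setIntegral_congr_fun measurableSet_Ioi fun t _ => ?_
  simp only [Real.rpow_natCast, Real.rpow_two]
  congr 2
  ring

theorem radialMoment_pos (q : ℕ) : 0 < radialMoment q := by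
  rw [radialMoment_eq_Gamma]
  have := Real.Gamma_pos_of_pos (s := ((q : ℝ) + 1) / 2) (by positivity)
  positivity

theorem radialMoment_add_two (q : ℕ) : radialMoment (q + 2) = (q + 1) * radialMoment q := by
  rw [radialMoment_eq_Gamma, radialMoment_eq_Gamma]
  have h1 : (((q + 2 : ℕ) : ℝ) + 1) / 2 = ((q : ℝ) + 1) / 2 + 1 := by push_cast; ring
  have h2 : -(((q + 2 : ℕ) : ℝ) + 1) / 2 = -((q : ℝ) + 1) / 2 - 1 := by push_cast; ring
  rw [h1, h2, Real.Gamma_add_one (by positivity), Real.rpow_sub_one (by norm_num)]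
  ring

theorem radialMoment_add_two_mul (q j : ℕ) :
    radialMoment (q + 2 * j) = (∏ i ∈ Finset.range j, ((q : ℝ) + 1 + 2 * i)) * radialMoment q := by
  induction j with
  | zero => simp
  | succ j ih =>
    rw [show q + 2 * (j + 1) = q + 2 * j + 2 by ring, radialMoment_add_two, ih,
      Finset.prod_range_succ]
    push_cast
    ring

theorem integrableOn_pow_mul_exp_scaled (q : ℕ) {r : ℝ} (hr : 0 < r) :
    IntegrableOn (fun t : ℝ => t ^ q * Real.exp (-((t * r) ^ 2) / 2)) (Set.Ioi 0) := by
  have h := ((integrable_pow_mul_exp_neg_sq_div_two q).comp_mul_right' hr.ne').const_mul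
    ((r ^ q)⁻¹)
  refine (h.congr (Eventually.of_forall fun t => ?_)).integrableOn
  have : r ^ q ≠ 0 := by positivity
  simp only [mul_pow]
  field_simp

theorem integral_pow_mul_exp_scaled (q : ℕ) {r : ℝ} (hr : 0 < r) :
    ∫ t in Set.Ioi (0 : ℝ), t ^ q * Real.exp (-((t * r) ^ 2) / 2) =
      radialMoment q / r ^ (q + 1) := by
  have h := integral_comp_mul_right_Ioi (fun t : ℝ => t ^ q * Real.exp (-(t ^ 2) / 2)) 0 hr
  have hrq : r ^ q ≠ 0 := by positivity
  have h2 : ∫ t in Set.Ioi (0 : ℝ), t ^ q * Real.exp (-((t * r) ^ 2) / 2) =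
      (r ^ q)⁻¹ * ∫ t in Set.Ioi (0 : ℝ), (t * r) ^ q * Real.exp (-((t * r) ^ 2) / 2) := by
    rw [← integral_const_mul]
    congr 1
    funext t
    rw [mul_pow t r q]
    field_simp
  rw [h2, h, zero_mul, smul_eq_mul, pow_succ]
  change _ * (_ * radialMoment q) = _
  field_simp

/-! ### The sphere area -/

theorem omegaS_eq {m : ℕ} (hm : m ≠ 0) :
    omegaS m = m * (√Real.pi ^ m / Real.Gamma ((m : ℝ) / 2 + 1)) := by
  have : Nonempty (Fin m) := Fin.pos_iff_nonempty.mp (Nat.pos_of_ne_zero hm)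
  have hG : 0 < Real.Gamma ((m : ℝ) / 2 + 1) := Real.Gamma_pos_of_pos (by positivity)
  rw [omegaS, sphereM, Measure.map_apply measurable_subtype_coe MeasurableSet.univ,
    Set.preimage_univ, Measure.toSphere_apply_univ, EuclideanSpace.volume_ball]
  simp only [finrank_euclideanSpace, Fintype.card_fin, ENNReal.ofReal_one, one_pow, one_mul,
    ENNReal.toReal_mul, ENNReal.toReal_natCast]
  rw [ENNReal.toReal_ofReal (by positivity)]

theorem gaussInt_one (m : ℕ) :
    gaussInt (1 : MvPolynomial (Fin m) ℝ) = √(2 * Real.pi) ^ m := by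
  simp only [gaussInt, map_one, one_mul, gaussWeight]
  rw [integral_fintype_prod_volume_eq_pow fun x : ℝ => Real.exp (-(x ^ 2) / 2), Fintype.card_fin]
  have h := integral_gaussian (1 / 2)
  rw [show Real.pi / (1 / 2) = 2 * Real.pi by ring] at h
  rw [← h]
  congr 2
  funext x
  congr 1
  ring

theorem gaussInt_one_eq_omegaS (d : ℕ) :
    gaussInt (1 : MvPolynomial (Fin (d + 1)) ℝ) = omegaS (d + 1) * radialMoment d := by
  have hG : 0 < Real.Gamma (((d : ℝ) + 1) / 2) := Real.Gamma_pos_of_pos (by positivity)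
  rw [gaussInt_one, omegaS_eq (Nat.succ_ne_zero d), radialMoment_eq_Gamma]
  push_cast
  rw [Real.Gamma_add_one (by positivity), Real.sqrt_mul (by norm_num), mul_pow]
  have h2 : (1 / 2 : ℝ) ^ (-((d : ℝ) + 1) / 2) = √2 ^ (d + 1) := by
    rw [one_div, Real.inv_rpow (by norm_num), ← Real.rpow_neg (by norm_num), Real.sqrt_eq_rpow,
      ← Real.rpow_natCast, ← Real.rpow_mul (by norm_num)]
    congr 1
    push_cast
    ring
  rw [h2]
  have : (d : ℝ) + 1 ≠ 0 := by positivity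
  field_simp

/-! ### Slicing the Gaussian integral by half-lines through a hyperplane -/

section Slicing

open MvPolynomial

theorem gaussWeight_ofLp {m : ℕ} (x : Evec m) :
    gaussWeight (fun i => x i) = Real.exp (-(‖x‖ ^ 2) / 2) := by
  rw [gaussWeight, ← Real.exp_sum, EuclideanSpace.real_norm_sq_eq, ← Finset.sum_div,
    Finset.sum_neg_distrib]

theorem upP_castSucc {d : ℕ} (x : Evec d) (y : ℝ) (i : Fin d) :
    upP d x y i.castSucc = x i := by
  simp [upP]

theorem upP_last {d : ℕ} (x : Evec d) (y : ℝ) : upP d x y (Fin.last d) = y := by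
  simp [upP]

theorem norm_upP_sq {d : ℕ} (x : Evec d) (y : ℝ) : ‖upP d x y‖ ^ 2 = ‖x‖ ^ 2 + y ^ 2 := by
  rw [EuclideanSpace.real_norm_sq_eq, EuclideanSpace.real_norm_sq_eq, Fin.sum_univ_castSucc]
  simp only [upP_castSucc, upP_last]

theorem upP_smul {d : ℕ} (t : ℝ) (x : Evec d) (y : ℝ) :
    upP d (t • x) (t * y) = t • upP d x y := by
  ext i
  refine Fin.lastCases ?_ (fun i => ?_) i
  · simp [upP_last]
  · simp [upP_castSucc]

theorem norm_le_norm_upP {d : ℕ} (x : Evec d) (y : ℝ) : ‖x‖ ≤ ‖upP d x y‖ := by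
  refine le_of_abs_le (sq_le_sq.mp ?_ |>.trans_eq (abs_of_nonneg (norm_nonneg _)))
  rw [norm_upP_sq]
  nlinarith

theorem le_norm_upP {d : ℕ} (x : Evec d) (y : ℝ) : y ≤ ‖upP d x y‖ := by
  refine le_of_abs_le (sq_le_sq.mp ?_ |>.trans_eq (abs_of_nonneg (norm_nonneg _)))
  rw [norm_upP_sq]
  nlinarith [sq_nonneg ‖x‖]

theorem continuous_upP (d : ℕ) (y : ℝ) : Continuous fun x : Evec d => upP d x y := by
  unfold upP
  fun_prop

theorem abs_eval_le_of_isHomogeneous {m n : ℕ} {P : MvPolynomial (Fin m) ℝ}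
    (hP : P.IsHomogeneous n) :
    ∃ K : ℝ, 0 ≤ K ∧ ∀ x : Evec m, |eval (fun i => x i) P| ≤ K * ‖x‖ ^ n := by
  refine ⟨∑ s ∈ P.support, |coeff s P|, Finset.sum_nonneg fun _ _ => abs_nonneg _, fun x => ?_⟩
  rw [eval_eq', Finset.sum_mul]
  refine (Finset.abs_sum_le_sum_abs _ _).trans (Finset.sum_le_sum fun s hs => ?_)
  have hdeg : ∑ i, s i = n := by
    rw [← hP (mem_support_iff.mp hs), Finsupp.weight_apply, Finsupp.sum_fintype _ _ (by simp)]
    simp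
  rw [abs_mul, Finset.abs_prod, ← hdeg, ← Finset.prod_pow_eq_pow_sum]
  gcongr with i
  rw [abs_pow]
  gcongr
  exact PiLp.norm_apply_le x i

theorem continuous_eval_upP {d : ℕ} (P : MvPolynomial (Fin (d + 1)) ℝ) (y : ℝ) :
    Continuous fun z : Evec d => eval (fun i => upP d z y i) P := by
  have h : Continuous fun z : Evec d => fun i => upP d z y i :=
    continuous_pi fun i => (EuclideanSpace.proj i : Evec (d + 1) →L[ℝ] ℝ).continuous.comp
      (continuous_upP d y)
  exact P.continuous_eval.comp h

theorem integrable_eval_upP_div {d n : ℕ} {P : MvPolynomial (Fin (d + 1)) ℝ}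
    (hP : P.IsHomogeneous n) {y : ℝ} (hy : 0 < y) :
    Integrable fun z : Evec d => eval (fun i => upP d z y i) P / ‖upP d z y‖ ^ (d + n + 1) := by
  obtain ⟨K, hK, hb⟩ := abs_eval_le_of_isHomogeneous hP
  have hpos (z : Evec d) : 0 < ‖upP d z y‖ := hy.trans_le (le_norm_upP z y)
  have hint := ((integrable_one_add_norm (E := Evec d) (μ := volume) (r := (d : ℝ) + 1)
    (by simp)).const_mul (K * (1 / y + 1) ^ (d + 1)))
  refine hint.mono' ?_ (Eventually.of_forall fun z => ?_)
  · refine ((continuous_eval_upP P y).div ((continuous_upP d y).norm.pow _)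
      fun z => ?_).aestronglyMeasurable
    exact (pow_pos (hpos z) _).ne'
  · have h1 : 1 + ‖z‖ ≤ (1 / y + 1) * ‖upP d z y‖ := by
      have h2 : 1 ≤ 1 / y * ‖upP d z y‖ := by
        rw [one_div, ← div_eq_inv_mul, one_le_div hy]
        exact le_norm_upP z y
      linarith [norm_le_norm_upP z y]
    have h3 : (1 + ‖z‖) ^ (-((d : ℝ) + 1)) = ((1 + ‖z‖) ^ (d + 1))⁻¹ := by
      rw [Real.rpow_neg (by positivity), ← Real.rpow_natCast]
      norm_cast
    have h4 : (1 + ‖z‖) ^ (d + 1) ≤ (1 / y + 1) ^ (d + 1) * ‖upP d z y‖ ^ (d + 1) := by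
      rw [← mul_pow]
      gcongr
    have hp := hpos z
    rw [h3, norm_div, Real.norm_eq_abs, norm_pow, norm_norm, div_le_iff₀ (by positivity)]
    calc |eval (fun i => upP d z y i) P| ≤ K * ‖upP d z y‖ ^ n := hb _
      _ = K * ‖upP d z y‖ ^ n * ((1 + ‖z‖) ^ (d + 1) * ((1 + ‖z‖) ^ (d + 1))⁻¹) := by
          rw [mul_inv_cancel₀ (by positivity), mul_one]
      _ ≤ K * ‖upP d z y‖ ^ n * (((1 / y + 1) ^ (d + 1) * ‖upP d z y‖ ^ (d + 1)) *
            ((1 + ‖z‖) ^ (d + 1))⁻¹) := by gcongr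
      _ = K * (1 / y + 1) ^ (d + 1) * ((1 + ‖z‖) ^ (d + 1))⁻¹ * ‖upP d z y‖ ^ (d + n + 1) := by
          rw [show d + n + 1 = n + (d + 1) by ring, pow_add]
          ring

/-- Fubini's theorem for the Gaussian functional, singling out the last coordinate. -/
theorem gaussInt_eq_integral_slices {d : ℕ} (P : MvPolynomial (Fin (d + 1)) ℝ) :
    gaussInt P = ∫ s : ℝ, ∫ z : Evec d,
      eval (fun i => upP d z s i) P * Real.exp (-(‖upP d z s‖ ^ 2) / 2) := by
  have he := (volume_preserving_piFinSuccAbove (fun _ : Fin (d + 1) => ℝ) (Fin.last d)).symm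
  have hint := (he.integrable_comp_emb (MeasurableEquiv.measurableEmbedding _)).mpr
    (integrable_eval_mul_gaussWeight P)
  have h1 := he.integral_comp' fun x : Fin (d + 1) → ℝ => eval x P * gaussWeight x
  rw [gaussInt, ← h1]
  refine (integral_prod _ hint).trans ?_
  congr 1
  funext s
  rw [← (PiLp.volume_preserving_ofLp (Fin d)).integral_comp
    (MeasurableEquiv.toLp 2 (Fin d → ℝ)).symm.measurableEmbedding]
  congr 1
  funext z
  have hz : (MeasurableEquiv.piFinSuccAbove (fun _ : Fin (d + 1) => ℝ) (Fin.last d)).symm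
      (s, WithLp.ofLp z) = fun i => upP d z s i := by
    funext i
    refine Fin.lastCases ?_ (fun i => ?_) i
    · simp [upP_last]
    · simp [upP_castSucc]
  simp only [Function.comp_apply]
  rw [hz, gaussWeight_ofLp]

theorem eval_upP_smul {d n : ℕ} {P : MvPolynomial (Fin (d + 1)) ℝ} (hP : P.IsHomogeneous n)
    (t : ℝ) (z : Evec d) (y : ℝ) :
    eval (fun i => upP d (t • z) (t * y) i) P = t ^ n * eval (fun i => upP d z y i) P := by
  rw [upP_smul, ← eval_smul_of_isHomogeneous hP]
  rfl

/-- The Gaussian integral of an even homogeneous polynomial as an integral over a hyperplane. -/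
theorem gaussInt_eq_integral_upP {d n : ℕ} (hn : Even n) {P : MvPolynomial (Fin (d + 1)) ℝ}
    (hP : P.IsHomogeneous n) {y : ℝ} (hy : 0 < y) :
    gaussInt P = 2 * y * radialMoment (d + n) *
      ∫ z : Evec d, eval (fun i => upP d z y i) P / ‖upP d z y‖ ^ (d + n + 1) := by
  have hpos (z : Evec d) : 0 < ‖upP d z y‖ := hy.trans_le (le_norm_upP z y)
  set K : ℝ → ℝ := fun s => ∫ z : Evec d,
    eval (fun i => upP d z s i) P * Real.exp (-(‖upP d z s‖ ^ 2) / 2) with hK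
  have hscale (t s : ℝ) (ht : t ≠ 0) : K (t * s) = |t| ^ d * ∫ z : Evec d,
      t ^ n * eval (fun i => upP d z s i) P * Real.exp (-((t * ‖upP d z s‖) ^ 2) / 2) := by
    have h := Measure.integral_comp_smul (volume : Measure (Evec d)) (fun z : Evec d =>
      eval (fun i => upP d z (t * s) i) P * Real.exp (-(‖upP d z (t * s)‖ ^ 2) / 2)) t
    simp only [eval_upP_smul hP] at h
    simp only [upP_smul, norm_smul, mul_pow, Real.norm_eq_abs, sq_abs,
      finrank_euclideanSpace, Fintype.card_fin, smul_eq_mul] at h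
    simp only [mul_pow]
    rw [h, abs_inv, abs_pow, ← mul_assoc, mul_inv_cancel₀ (by positivity), one_mul]
  have hKabs (s : ℝ) : K |s| = K s := by
    rcases abs_choice s with h | h
    · rw [h]
    · have h1 := hscale (-1) s (by norm_num)
      simp only [hn.neg_one_pow, abs_neg, abs_one, one_pow, one_mul, neg_mul, neg_sq] at h1
      rw [h, h1]
  have hhalf : gaussInt P = 2 * ∫ s in Set.Ioi (0 : ℝ), K s := by
    rw [gaussInt_eq_integral_slices, ← integral_comp_abs]
    exact integral_congr_ae (Eventually.of_forall fun s => (hKabs s).symm)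
  have hsub : ∫ s in Set.Ioi (0 : ℝ), K s = y * ∫ t in Set.Ioi (0 : ℝ), K (t * y) := by
    have h := integral_comp_mul_right_Ioi K 0 hy
    rw [h, zero_mul, smul_eq_mul, mul_inv_cancel_left₀ hy.ne']
  set F : ℝ → Evec d → ℝ := fun t z =>
    eval (fun i => upP d z y i) P * (t ^ (d + n) * Real.exp (-((t * ‖upP d z y‖) ^ 2) / 2)) with hF
  have hKF : ∫ t in Set.Ioi (0 : ℝ), K (t * y) = ∫ t in Set.Ioi (0 : ℝ), ∫ z, F t z := by
    refine setIntegral_congr_fun measurableSet_Ioi fun t ht => ?_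
    have ht' : 0 < t := ht
    rw [hscale t y ht'.ne', abs_of_pos ht', ← integral_const_mul]
    congr 1
    funext z
    simp only [hF]
    ring
  have hFcont : Continuous (Function.uncurry F) := by
    have h1 := (continuous_eval_upP P y).comp (continuous_snd (X := ℝ))
    have h2 := (continuous_upP d y).norm.comp (continuous_snd (X := ℝ))
    simp only [Function.comp_def] at h1 h2
    simp only [hF, Function.uncurry_def]
    fun_prop
  have hFint : Integrable (Function.uncurry F)
      ((volume.restrict (Set.Ioi (0 : ℝ))).prod (volume : Measure (Evec d))) := by
    rw [integrable_prod_iff' hFcont.aestronglyMeasurable]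
    constructor
    · exact Eventually.of_forall fun z =>
        Integrable.const_mul (integrableOn_pow_mul_exp_scaled (d + n) (hpos z))
          (eval (fun i => upP d z y i) P)
    · refine ((integrable_eval_upP_div hP hy).norm.const_mul (radialMoment (d + n))).congr
        (Eventually.of_forall fun z => ?_)
      have h1 : ∀ t ∈ Set.Ioi (0 : ℝ), ‖Function.uncurry F (t, z)‖ =
          |eval (fun i => upP d z y i) P| *
            (t ^ (d + n) * Real.exp (-((t * ‖upP d z y‖) ^ 2) / 2)) := by
        intro t ht
        have ht' : 0 < t := ht
        simp only [hF, Function.uncurry_apply_pair, Real.norm_eq_abs, abs_mul, Real.abs_exp,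
          abs_pow, abs_of_pos ht']
      simp only []
      rw [setIntegral_congr_fun measurableSet_Ioi h1, integral_const_mul,
        integral_pow_mul_exp_scaled _ (hpos z), norm_div, norm_pow, norm_norm, Real.norm_eq_abs]
      ring
  rw [hhalf, hsub, hKF, integral_integral_swap hFint]
  have hinner (z : Evec d) : ∫ t in Set.Ioi (0 : ℝ), F t z = radialMoment (d + n) *
      (eval (fun i => upP d z y i) P / ‖upP d z y‖ ^ (d + n + 1)) := by
    simp only [hF]
    rw [integral_const_mul, integral_pow_mul_exp_scaled _ (hpos z)]
    ring
  simp only [hinner]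
  rw [integral_const_mul]
  ring

end Slicing

/-! ### The constant -/

/-- A terminating case of Gauss's summation of `₂F₁(-k, 1; a/2; 1)`. -/
theorem sum_choose_div_prod_eq (k : ℕ) : ∀ (a : ℝ) (N : ℕ), 2 < a → k < N →
    ∑ n ∈ Finset.range N, (-2 : ℝ) ^ n * (n.factorial * k.choose n) /
      ∏ i ∈ Finset.range n, (a + 2 * i) = (a - 2) / (a + 2 * k - 2) := by
  induction k with
  | zero =>
    intro a N ha hN
    rw [Finset.sum_eq_single_of_mem 0 (Finset.mem_range.mpr hN)]
    · have : a - 2 ≠ 0 := by linarith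
      simp [this]
    · intro n _ hn
      obtain ⟨l, rfl⟩ := Nat.exists_eq_succ_of_ne_zero hn
      simp
  | succ k ih =>
    intro a N ha hN
    obtain ⟨M, rfl⟩ : ∃ M, N = M + 1 := ⟨N - 1, by omega⟩
    have hterm (n : ℕ) : (-2 : ℝ) ^ (n + 1) * ((n + 1).factorial * (k + 1).choose (n + 1)) /
        ∏ i ∈ Finset.range (n + 1), (a + 2 * i) = -2 * (k + 1) / a *
        ((-2 : ℝ) ^ n * (n.factorial * k.choose n) /
          ∏ i ∈ Finset.range n, (a + 2 + 2 * i)) := by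
      have hc : ((k : ℝ) + 1) * k.choose n = (k + 1).choose (n + 1) * (n + 1) := by
        exact_mod_cast Nat.add_one_mul_choose_eq k n
      have hp : ∏ i ∈ Finset.range (n + 1), (a + 2 * i) =
          (∏ i ∈ Finset.range n, (a + 2 + 2 * i)) * a := by
        rw [Finset.prod_range_succ']
        push_cast
        congr 1
        · exact Finset.prod_congr rfl fun i _ => by ring
        · ring
      have hpos : 0 < ∏ i ∈ Finset.range n, (a + 2 + 2 * (i : ℝ)) :=
        Finset.prod_pos fun i _ => by positivity
      rw [hp, Nat.factorial_succ]
      push_cast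
      field_simp
      linear_combination (-2 : ℝ) ^ n * 2 * hc
    rw [Finset.sum_range_succ', Finset.sum_congr rfl fun n _ => hterm n, ← Finset.mul_sum,
      ih (a + 2) M (by linarith) (by omega)]
    have h1 : a + 2 + 2 * (k : ℝ) - 2 ≠ 0 := by
      have := k.cast_nonneg (α := ℝ)
      linarith
    have h2 : a + 2 * ((k + 1 : ℕ) : ℝ) - 2 ≠ 0 := by
      push_cast
      have := k.cast_nonneg (α := ℝ)
      linarith
    have h3 : a ≠ 0 := by linarith
    simp only [pow_zero, Nat.factorial_zero, Nat.choose_zero_right, Finset.prod_range_zero]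
    push_cast at *
    field_simp
    ring

theorem omegaS_pos {m : ℕ} (hm : m ≠ 0) : 0 < omegaS m := by
  rw [omegaS_eq hm]
  have := Real.Gamma_pos_of_pos (s := (m : ℝ) / 2 + 1) (by positivity)
  have := Nat.pos_of_ne_zero hm
  positivity

section Reflection

open MvPolynomial

theorem eval_linForm {m : ℕ} (x u : Evec m) :
    eval (fun i => x i) (linForm fun i => u i) = ⟪x, u⟫ := by
  simp [linForm, PiLp.inner_apply]

theorem isHomogeneous_linForm {m : ℕ} (u : Fin m → ℝ) : (linForm u).IsHomogeneous 1 :=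
  IsHomogeneous.sum _ _ _ fun i _ => by
    simpa using (isHomogeneous_C (Fin m) (u i)).mul (isHomogeneous_X ℝ i)

theorem isHomogeneous_linForm_pow_mul_taylorPart {m : ℕ} (u : Fin m → ℝ)
    (P : MvPolynomial (Fin m) ℝ) (n : ℕ) :
    (linForm u ^ n * taylorPart u P n).IsHomogeneous (2 * n) := by
  have h := ((isHomogeneous_linForm u).pow n).mul
    (homogeneousComponent_isHomogeneous n (shiftPoly u P))
  rwa [one_mul, ← two_mul] at h

theorem eval_reflv {m : ℕ} (P : MvPolynomial (Fin m) ℝ) (x u : Evec m) {N : ℕ}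
    (hN : (shiftPoly (fun i => u i) P).totalDegree < N) :
    eval (fun i => reflv x u i) P = ∑ n ∈ Finset.range N, (-2) ^ n *
      (eval (fun i => x i) (linForm (fun i => u i) ^ n * taylorPart (fun i => u i) P n) /
        ‖x‖ ^ (2 * n)) := by
  have h := eval_add_smul_eq_sum_taylorPart (fun i => u i) P (-(2 * ⟪x, u⟫ / ‖x‖ ^ 2))
    (fun i => x i) hN
  have hx : (fun i => u i) + (-(2 * ⟪x, u⟫ / ‖x‖ ^ 2)) • (fun i => x i) =
      fun i => reflv x u i := by
    funext i
    simp [reflv, sub_eq_add_neg]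
  rw [hx] at h
  rw [h]
  refine Finset.sum_congr rfl fun n _ => ?_
  rw [map_mul, map_pow, eval_linForm, pow_mul, ← neg_div, div_pow, ← neg_mul, mul_pow]
  ring

/-- The hyperplane integral of each Taylor term of a harmonic homogeneous polynomial. -/
theorem integral_linForm_pow_mul_taylorPart {d k : ℕ} {P : MvPolynomial (Fin (d + 1)) ℝ}
    (hhom : ∀ (c : ℝ) (x : Fin (d + 1) → ℝ), eval (c • x) P = c ^ k * eval x P)
    (hharm : mvLaplacian P = 0) (u : Fin (d + 1) → ℝ) {y : ℝ} (hy : 0 < y) (n : ℕ) :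
    y * ∫ z : Evec d, eval (fun i => upP d z y i) (linForm u ^ n * taylorPart u P n) /
        ‖upP d z y‖ ^ (d + 2 * n + 1) =
      omegaS (d + 1) / 2 * eval u P *
        (n.factorial * k.choose n / ∏ i ∈ Finset.range n, (((d + 1 : ℕ) : ℝ) + 2 * i)) := by
  have h1 := gaussInt_linForm_pow_mul_harmonic u n n (taylorPart u P n)
    (homogeneousComponent_isHomogeneous n _) (mvLaplacian_taylorPart u hharm n) le_rfl
  rw [if_pos rfl, eval_self_taylorPart u hhom, gaussInt_one_eq_omegaS,
    gaussInt_eq_integral_upP (even_two_mul n) (isHomogeneous_linForm_pow_mul_taylorPart u P n) hy,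
    radialMoment_add_two_mul] at h1
  have hr := radialMoment_pos d
  have hpos : 0 < ∏ i ∈ Finset.range n, ((d : ℝ) + 1 + 2 * i) :=
    Finset.prod_pos fun i _ => by positivity
  push_cast
  set I := ∫ z : Evec d, eval (fun i => upP d z y i) (linForm u ^ n * taylorPart u P n) /
        ‖upP d z y‖ ^ (d + 2 * n + 1)
  set Q := ∏ i ∈ Finset.range n, ((d : ℝ) + 1 + 2 * i)
  field_simp
  refine mul_right_cancel₀ hr.ne' ?_
  linear_combination h1

end Reflection

/-- Lemma 1: reproducing property of the half-space Poisson kernel.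
Here `m = d+1 ≥ 3`. -/
theorem stmt_0 (d k : ℕ) (hm : 3 ≤ d + 1) (hk : 1 ≤ k)
    (f : Evec (d + 1) → ℝ) (hf : IsHk (d + 1) k f) (u : Evec (d + 1))
    (y : ℝ) (hy : 0 < y) :
    cmk (d + 1) k *
      (∫ x' : Evec d, (y / ‖upP d x' y‖ ^ (d + 1)) * f (reflv (upP d x' y) u)) = f u := by
  obtain ⟨⟨P, hP⟩, hhom, hharm⟩ := hf
  have hfP : f = fun x : Evec (d + 1) => MvPolynomial.eval (fun i => x i) P := funext hP
  have hL : mvLaplacian P = 0 := mvLaplacian_eq_zero_of_lapl P (hfP ▸ hharm)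
  have hhomP (c : ℝ) (x : Fin (d + 1) → ℝ) :
      MvPolynomial.eval (c • x) P = c ^ k * MvPolynomial.eval x P := by
    have h := hhom c (WithLp.toLp 2 x)
    rw [hP, hP] at h
    exact h
  set v : Fin (d + 1) → ℝ := fun i => u i with hv
  set N := max ((shiftPoly v P).totalDegree + 1) (k + 1) with hN
  have hNdeg : (shiftPoly v P).totalDegree < N := by omega
  have hint (n : ℕ) := integrable_eval_upP_div
    (isHomogeneous_linForm_pow_mul_taylorPart v P n) hy
  have hpt (z : Evec d) : y / ‖upP d z y‖ ^ (d + 1) * f (reflv (upP d z y) u) =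
      ∑ n ∈ Finset.range N, (-2) ^ n * y *
        (MvPolynomial.eval (fun i => upP d z y i) (linForm v ^ n * taylorPart v P n) /
          ‖upP d z y‖ ^ (d + 2 * n + 1)) := by
    rw [hP, eval_reflv P (upP d z y) u (N := N) hNdeg, Finset.mul_sum]
    refine Finset.sum_congr rfl fun n _ => ?_
    rw [show d + 2 * n + 1 = (d + 1) + 2 * n by ring, pow_add]
    ring
  have hd : (2 : ℝ) < ((d + 1 : ℕ) : ℝ) := by exact_mod_cast hm
  have hω := omegaS_pos (Nat.succ_ne_zero d)
  simp only [hpt]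
  rw [integral_finsetSum _ fun n _ => (hint n).const_mul _]
  simp only [integral_const_mul, mul_assoc,
    integral_linForm_pow_mul_taylorPart hhomP hL v hy]
  have hsum := sum_choose_div_prod_eq k ((d + 1 : ℕ) : ℝ) N hd (by omega)
  have hfac : ∑ n ∈ Finset.range N, (-2 : ℝ) ^ n * (omegaS (d + 1) / 2 *
      (MvPolynomial.eval v P * (n.factorial * k.choose n /
        ∏ i ∈ Finset.range n, (((d + 1 : ℕ) : ℝ) + 2 * i)))) =
      omegaS (d + 1) / 2 * MvPolynomial.eval v P *
        ((((d + 1 : ℕ) : ℝ) - 2) / (((d + 1 : ℕ) : ℝ) + 2 * k - 2)) := by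
    rw [← hsum, Finset.mul_sum]
    exact Finset.sum_congr rfl fun n _ => by ring
  rw [hfac, hP, cmk]
  have h1 : ((d + 1 : ℕ) : ℝ) - 2 ≠ 0 := by linarith
  have h2 : ((d + 1 : ℕ) : ℝ) + 2 * k - 2 ≠ 0 := by
    have := k.cast_nonneg (α := ℝ)
    linarith
  field_simp
  rw [hv]
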